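/- Let X and Y be independent positive real random variables with strictly positive, continuous densities f_X and f_Y on (0,∞). If V = X + Y and U = X/(X+Y) are independent, then there exist a > 0 and p₁, p₂ > 0 such that X has Gamma distribution with shape p₁ and rate a, and Y has Gamma distribution with shape p₂ and rate a; i.e., f_X(x) = a^{p₁}/Γ(p₁) · x^{p₁−1} e^{−ax} and f_Y(x) = a^{p₂}/Γ(p₂) · x^{p₂−1} e^{−ax} for all x > 0. -/

import Mathlib

open MeasureTheory ProbabilityTheory

/-!
In the coordinates `v = x + y`, `u = x / (x + y)`, independence of `V` and `U` says that
`f_X (u v) f_Y ((1 - u) v)` is almost everywhere a function of `v` times a function of `u`; by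
continuity its `2 × 2` minors then vanish everywhere. Hence, for each `s > 0`, the dilation
increments `log f_X (s x) - log f_X x` and `log f_Y (s y) - log f_Y y` have a sum depending on
`x + y` alone, so by Pexider's equation they are affine with the same slope. Composing dilations
turns this into `log f = A + c log x + b x` with the same `b` for both densities, and integrability
forces the Gamma range of the parameters.
-/

/-- All `2 × 2` minors of `q` vanish on `s ×ˢ t`. For real `q` this means that `q x y = a x * b y`
there; since the factors are not mentioned, it passes by continuity from almost every point to
every point. -/
def MinorsVanishOn {α β R : Type*} [Mul R] (q : α → β → R) (s : Set α) (t : Set β) : Prop :=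
  ∀ x ∈ s, ∀ x' ∈ s, ∀ y ∈ t, ∀ y' ∈ t, q x y * q x' y' = q x y' * q x' y

section FunctionalEquations

open Set

variable {E : Type*} [AddCommGroup E] [Module ℝ E] [TopologicalSpace E]
  [ContinuousSMul ℝ E] [T2Space E]

lemma eq_smul_one_of_continuous_of_map_add {f : ℝ → E} (hf : Continuous f)
    (hadd : ∀ s t, f (s + t) = f s + f t) (t : ℝ) : f t = t • f 1 := by
  simpa using map_real_smul (AddMonoidHom.mk' f hadd) hf t 1

variable [IsTopologicalAddGroup E]

lemma exists_eq_add_smul_of_increments_eq {f : ℝ → E} (hf : ContinuousOn f (Ioi 0))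
    (hincr : ∀ x y t, 0 < x → 0 < y → 0 < x + t → 0 < y + t → f (x + t) - f x = f (y + t) - f y) :
    ∃ β : E, ∀ x > 0, f x = f 1 + (x - 1) • β := by
  have base_pos (t : ℝ) : 0 < |t| + 1 := by positivity
  have shift_pos (t : ℝ) : 0 < |t| + 1 + t := by linarith [neg_abs_le t]
  let δ : ℝ → E := fun t ↦ f (|t| + 1 + t) - f (|t| + 1)
  have δ_eq {x t : ℝ} (hx : 0 < x) (hxt : 0 < x + t) : f (x + t) - f x = δ t :=
    hincr x _ t hx (base_pos t) hxt (shift_pos t)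
  have δ_continuous : Continuous δ :=
    (hf.comp_continuous (by fun_prop) shift_pos).sub (hf.comp_continuous (by fun_prop) base_pos)
  have δ_add (s t : ℝ) : δ (s + t) = δ s + δ t := by
    have hx : 0 < |s| + |t| + 1 := by positivity
    have hxs : 0 < |s| + |t| + 1 + s := by linarith [neg_abs_le s, abs_nonneg t]
    have hxst : 0 < |s| + |t| + 1 + s + t := by linarith [neg_abs_le s, neg_abs_le t]
    rw [← δ_eq hx hxs, ← δ_eq hxs hxst, ← δ_eq hx (by rwa [← add_assoc]), ← add_assoc]
    abel
  refine ⟨δ 1, fun x hx ↦ ?_⟩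
  rw [← eq_smul_one_of_continuous_of_map_add δ_continuous δ_add, ← δ_eq one_pos (by linarith)]
  simp only [add_sub_cancel]

theorem exists_affine_of_pexider {f g h : ℝ → E} (hf : ContinuousOn f (Ioi 0))
    (H : ∀ x > 0, ∀ y > 0, f x + g y = h (x + y)) :
    ∃ α γ β : E, (∀ x > 0, f x = α + x • β) ∧ ∀ x > 0, g x = γ + x • β := by
  have incr_eq {x y t : ℝ} (hx : 0 < x) (hy : 0 < y) (hxt : 0 < x + t) (hyt : 0 < y + t) :
      f (x + t) - f x = g (y + t) - g y := by
    rw [sub_eq_sub_iff_add_eq_add, H _ hxt _ hy, add_comm (g _), H _ hx _ hyt, add_assoc,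
      add_comm t]
  obtain ⟨β, hβ⟩ := exists_eq_add_smul_of_increments_eq hf fun x y t hx hy hxt hyt ↦
    (incr_eq hx hy hxt hyt).trans (incr_eq hy hy hyt hyt).symm
  refine ⟨f 1 - β, g 1 - β, β, fun x hx ↦ ?_, fun x hx ↦ ?_⟩
  · rw [hβ x hx]
    module
  · have h1 := incr_eq (t := x - 1) one_pos one_pos (by simpa) (by simpa)
    rw [add_sub_cancel, hβ x hx] at h1
    linear_combination (norm := module) -h1

theorem exists_eq_log_smul_of_dilation_sub_affine {F α β : ℝ → E} (hF : ContinuousOn F (Ioi 0))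
    (H : ∀ s > 0, ∀ x > 0, F (s * x) - F x = α s + x • β s) :
    ∃ c : E, ∀ x > 0, F x = F 1 + Real.log x • c + (x - 1) • β 2 := by
  have cocycle {s t x : ℝ} (hs : 0 < s) (ht : 0 < t) (hx : 0 < x) :
      α (s * t) + x • β (s * t) = α s + (t * x) • β s + (α t + x • β t) := by
    rw [← H _ (mul_pos hs ht) x hx, ← H s hs _ (mul_pos ht hx), ← H t ht x hx, mul_assoc]
    abel
  have β_mul {s t : ℝ} (hs : 0 < s) (ht : 0 < t) : β (s * t) = t • β s + β t := by
    linear_combination (norm := module) cocycle hs ht two_pos - cocycle hs ht one_pos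
  have α_mul {s t : ℝ} (hs : 0 < s) (ht : 0 < t) : α (s * t) = α s + α t := by
    linear_combination (norm := module) cocycle hs ht one_pos - β_mul hs ht
  have β_eq {s : ℝ} (hs : 0 < s) : β s = (s - 1) • β 2 := by
    have h := (β_mul hs two_pos).symm.trans ((congrArg β (mul_comm s 2)).trans (β_mul two_pos hs))
    linear_combination (norm := module) h
  have α_eq {s : ℝ} (hs : 0 < s) : α s = F s - F 1 - (s - 1) • β 2 := by
    have h := H s hs 1 one_pos
    rw [mul_one, one_smul, β_eq hs] at h
    rw [h, add_sub_cancel_right]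
  have α_exp_continuous : Continuous fun t ↦ α (Real.exp t) := by
    simp only [α_eq (Real.exp_pos _)]
    have hFexp : Continuous fun t ↦ F (Real.exp t) :=
      hF.comp_continuous Real.continuous_exp Real.exp_pos
    exact (hFexp.sub continuous_const).sub
      ((Real.continuous_exp.sub continuous_const).smul continuous_const)
  have α_exp (t : ℝ) : α (Real.exp t) = t • α (Real.exp 1) :=
    eq_smul_one_of_continuous_of_map_add α_exp_continuous (fun s t ↦ by
      rw [Real.exp_add, α_mul (Real.exp_pos s) (Real.exp_pos t)]) t
  refine ⟨α (Real.exp 1), fun x hx ↦ ?_⟩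
  rw [← α_exp, Real.exp_log hx, α_eq hx]
  abel

theorem exists_log_add_linear_of_dilation_sub {F G : ℝ → E} {h : ℝ → ℝ → E}
    (hF : ContinuousOn F (Ioi 0)) (hG : ContinuousOn G (Ioi 0))
    (H : ∀ s > 0, ∀ x > 0, ∀ y > 0, F (s * x) - F x + (G (s * y) - G y) = h s (x + y)) :
    ∃ A B c d b : E, (∀ x > 0, F x = A + Real.log x • c + x • b) ∧
      ∀ x > 0, G x = B + Real.log x • d + x • b := by
  have affine (s : ℝ) (hs : 0 < s) : ∃ α γ β : E,
      (∀ x > 0, F (s * x) - F x = α + x • β) ∧ ∀ x > 0, G (s * x) - G x = γ + x • β :=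
    exists_affine_of_pexider
      ((hF.comp (by fun_prop) fun x hx ↦ mul_pos hs hx).sub hF) (H s hs)
  choose! α γ β hFβ hGβ using affine
  obtain ⟨c, hc⟩ := exists_eq_log_smul_of_dilation_sub_affine hF hFβ
  obtain ⟨d, hd⟩ := exists_eq_log_smul_of_dilation_sub_affine hG hGβ
  refine ⟨F 1 - β 2, G 1 - β 2, c, d, β 2, fun x hx ↦ ?_, fun x hx ↦ ?_⟩
  · rw [hc x hx]
    module
  · rw [hd x hx]
    module

variable {f g : ℝ → ℝ}

lemma log_dilation_sub_add_eq_of_minorsVanishOn (hf0 : ∀ x > 0, 0 < f x) (hg0 : ∀ x > 0, 0 < g x)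
    (hfg : MinorsVanishOn (fun v u ↦ f (u * v) * g ((1 - u) * v)) (Ioi 0) (Ioo 0 1))
    {s x y : ℝ} (hs : 0 < s) (hx : 0 < x) (hy : 0 < y) :
    Real.log (f (s * x)) - Real.log (f x) + (Real.log (g (s * y)) - Real.log (g y)) =
      Real.log (f (1 / 2 * (s * (x + y))) * g ((1 - 1 / 2) * (s * (x + y)))) -
        Real.log (f (1 / 2 * (x + y)) * g ((1 - 1 / 2) * (x + y))) := by
  -- The fraction `1 / 2` is an arbitrary reference point, against which `x / (x + y)` is compared.
  have hv : 0 < x + y := add_pos hx hy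
  have hsv : 0 < s * (x + y) := mul_pos hs hv
  have fg_ne_zero {x y : ℝ} (hx : 0 < x) (hy : 0 < y) : f x * g y ≠ 0 :=
    (mul_pos (hf0 x hx) (hg0 y hy)).ne'
  have half_ne_zero {v : ℝ} (hv : 0 < v) : f (1 / 2 * v) * g ((1 - 1 / 2) * v) ≠ 0 :=
    fg_ne_zero (by linarith) (by linarith)
  have log_fg {x y : ℝ} (hx : 0 < x) (hy : 0 < y) :
      Real.log (f x * g y) = Real.log (f x) + Real.log (g y) :=
    Real.log_mul (hf0 x hx).ne' (hg0 y hy).ne'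
  have h := hfg (s * (x + y)) hsv (x + y) hv (x / (x + y))
    ⟨by positivity, (div_lt_one hv).2 (by linarith)⟩ (1 / 2) (by norm_num)
  beta_reduce at h
  rw [show x / (x + y) * (s * (x + y)) = s * x by field_simp,
    show (1 - x / (x + y)) * (s * (x + y)) = s * y by field_simp; ring,
    show x / (x + y) * (x + y) = x by field_simp,
    show (1 - x / (x + y)) * (x + y) = y by field_simp; ring] at h
  apply_fun Real.log at h
  rw [Real.log_mul (fg_ne_zero (mul_pos hs hx) (mul_pos hs hy)) (half_ne_zero hv),
    Real.log_mul (half_ne_zero hsv) (fg_ne_zero hx hy), log_fg hx hy,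
    log_fg (mul_pos hs hx) (mul_pos hs hy)] at h
  linarith

theorem exists_eq_mul_rpow_mul_exp_of_minorsVanishOn
    (hf : ContinuousOn f (Ioi 0)) (hg : ContinuousOn g (Ioi 0))
    (hf0 : ∀ x > 0, 0 < f x) (hg0 : ∀ x > 0, 0 < g x)
    (hfg : MinorsVanishOn (fun v u ↦ f (u * v) * g ((1 - u) * v)) (Ioi 0) (Ioo 0 1)) :
    ∃ C D p q a : ℝ, (∀ x > 0, f x = C * (x ^ (p - 1) * Real.exp (-(a * x)))) ∧
      ∀ x > 0, g x = D * (x ^ (q - 1) * Real.exp (-(a * x))) := by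
  have eq_of_log_eq {k : ℝ → ℝ} (hk0 : ∀ x > 0, 0 < k x) {A c b : ℝ}
      (hk : ∀ x > 0, Real.log (k x) = A + Real.log x • c + x • b) (x : ℝ) (hx : x > 0) :
      k x = Real.exp A * (x ^ (c + 1 - 1) * Real.exp (-(-b * x))) := by
    rw [← Real.exp_log (hk0 x hx), hk x hx, add_sub_cancel_right, Real.rpow_def_of_pos hx,
      ← Real.exp_add, ← Real.exp_add, smul_eq_mul, smul_eq_mul]
    ring_nf
  obtain ⟨A, B, c, d, b, hF, hG⟩ := exists_log_add_linear_of_dilation_sub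
    (hf.log fun x hx ↦ (hf0 x hx).ne') (hg.log fun x hx ↦ (hg0 x hx).ne')
    (h := fun s v ↦ Real.log (f (1 / 2 * (s * v)) * g ((1 - 1 / 2) * (s * v))) -
      Real.log (f (1 / 2 * v) * g ((1 - 1 / 2) * v)))
    fun s hs x hx y hy ↦ log_dilation_sub_add_eq_of_minorsVanishOn hf0 hg0 hfg hs hx hy
  exact ⟨Real.exp A, Real.exp B, c + 1, d + 1, -b, eq_of_log_eq hf0 hF, eq_of_log_eq hg0 hG⟩

end FunctionalEquations

section Independence

open Set

theorem minorsVanishOn_of_ae_eq_mul {α β R : Type*} [TopologicalSpace α] [MeasurableSpace α]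
    [OpensMeasurableSpace α] [TopologicalSpace β] [MeasurableSpace β] [OpensMeasurableSpace β]
    [CommSemigroup R] [TopologicalSpace R] [ContinuousMul R] [T2Space R]
    {μ : Measure α} {ν : Measure β} [μ.IsOpenPosMeasure] [ν.IsOpenPosMeasure] [SFinite ν]
    {s : Set α} {t : Set β} (hs : IsOpen s) (ht : IsOpen t) {q : α → β → R}
    (hq₁ : ∀ y ∈ t, ContinuousOn (fun x ↦ q x y) s) (hq₂ : ∀ x ∈ s, ContinuousOn (q x) t)
    {a : α → R} {b : β → R}
    (hab : ∀ᵐ z ∂(μ.restrict s).prod (ν.restrict t), q z.1 z.2 = a z.1 * b z.2) :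
    MinorsVanishOn q s t := by
  have good : ∀ᵐ x ∂μ.restrict s, x ∈ s ∧ ∀ᵐ y ∂ν.restrict t, q x y = a x * b y :=
    (ae_restrict_mem hs.measurableSet).and (Measure.ae_ae_of_ae_prod hab)
  have cross_good {x x' : α} (hx : x ∈ s ∧ ∀ᵐ y ∂ν.restrict t, q x y = a x * b y)
      (hx' : x' ∈ s ∧ ∀ᵐ y ∂ν.restrict t, q x' y = a x' * b y) :
      ∀ y ∈ t, ∀ y' ∈ t, q x y * q x' y' = q x y' * q x' y := by
    intro y hy y' hy'
    refine Measure.eqOn_open_of_ae_eq (μ := ν) ?_ ht ((hq₂ x hx.1).mul_const _)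
      ((hq₂ x' hx'.1).const_mul _) hy
    filter_upwards [hx.2, hx'.2] with y hxy hx'y
    refine Measure.eqOn_open_of_ae_eq (μ := ν) ?_ ht ((hq₂ x' hx'.1).const_mul _)
      ((hq₂ x hx.1).mul_const _) hy'
    filter_upwards [hx.2, hx'.2] with y' hxy' hx'y'
    rw [hxy, hx'y', hxy', hx'y, mul_mul_mul_comm, mul_comm (b y), ← mul_mul_mul_comm]
  intro x hx x' hx' y hy y' hy'
  refine Measure.eqOn_open_of_ae_eq (μ := μ) ?_ hs ((hq₁ y hy).mul_const _)
    ((hq₁ y' hy').mul_const _) hx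
  filter_upwards [good] with x hxg
  refine Measure.eqOn_open_of_ae_eq (μ := μ) ?_ hs ((hq₁ y' hy').const_mul _)
    ((hq₁ y hy).const_mul _) hx'
  filter_upwards [good] with x' hxg'
  exact cross_good hxg hxg' y hy y' hy'

/-- The map `(x, y) ↦ (x + y, x / (x + y))` from the open quadrant onto the strip
`(0, ∞) × (0, 1)`: the change of coordinates from `(X, Y)` to `(V, U)`. -/
noncomputable def sumFraction : PartialEquiv (ℝ × ℝ) (ℝ × ℝ) where
  toFun p := (p.1 + p.2, p.1 / (p.1 + p.2))
  invFun z := (z.2 * z.1, (1 - z.2) * z.1)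
  source := Ioi 0 ×ˢ Ioi 0
  target := Ioi 0 ×ˢ Ioo 0 1
  map_source' := by
    rintro ⟨x, y⟩ ⟨hx : 0 < x, hy : 0 < y⟩
    exact ⟨add_pos hx hy, by positivity, (div_lt_one (add_pos hx hy)).2 (by linarith)⟩
  map_target' := by
    rintro ⟨v, u⟩ ⟨hv, hu⟩
    exact ⟨mul_pos hu.1 hv, mul_pos (sub_pos.2 hu.2) hv⟩
  left_inv' := by
    rintro ⟨x, y⟩ ⟨hx : 0 < x, hy : 0 < y⟩
    ext <;> field_simp
    ring
  right_inv' := by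
    rintro ⟨v, u⟩ ⟨hv : 0 < v, _⟩
    ext <;> field_simp <;> ring

lemma measurable_sumFraction : Measurable sumFraction :=
  (measurable_fst.add measurable_snd).prodMk
    (measurable_fst.div (measurable_fst.add measurable_snd))

lemma measurableSet_sumFraction_target : MeasurableSet sumFraction.target :=
  measurableSet_Ioi.prod measurableSet_Ioo

/-- The derivative of `sumFraction.symm`. -/
noncomputable def fderivSumFractionSymm (z : ℝ × ℝ) : ℝ × ℝ →L[ℝ] ℝ × ℝ :=
  (Matrix.toLin (.finTwoProd ℝ) (.finTwoProd ℝ) !![z.2, z.1; 1 - z.2, -z.1]).toContinuousLinearMap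

lemma hasFDerivAt_sumFraction_symm (z : ℝ × ℝ) :
    HasFDerivAt sumFraction.symm (fderivSumFractionSymm z) z := by
  rw [fderivSumFractionSymm, Matrix.toLin_finTwoProd_toContinuousLinearMap]
  have hfst : HasFDerivAt (fun z : ℝ × ℝ ↦ z.1) (.fst ℝ ℝ ℝ) z := hasFDerivAt_fst
  have hsnd : HasFDerivAt (fun z : ℝ × ℝ ↦ z.2) (.snd ℝ ℝ ℝ) z := hasFDerivAt_snd
  convert! HasFDerivAt.prodMk (𝕜 := ℝ) (hsnd.mul hfst) ((hsnd.const_sub 1).mul hfst) using 2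
  simp [neg_smul _ (ContinuousLinearMap.snd ℝ ℝ ℝ)]

lemma det_fderivSumFractionSymm (z : ℝ × ℝ) : (fderivSumFractionSymm z).det = -z.1 := by
  simp only [fderivSumFractionSymm, LinearMap.det_toContinuousLinearMap, LinearMap.det_toLin,
    Matrix.det_fin_two_of]
  ring

lemma setLIntegral_sumFraction_source (h : ℝ × ℝ → ENNReal) :
    ∫⁻ p in sumFraction.source, h p =
      ∫⁻ z in sumFraction.target, ENNReal.ofReal z.1 * h (sumFraction.symm z) := by
  rw [← sumFraction.symm_image_target_eq_source,
    lintegral_image_eq_lintegral_abs_det_fderiv_mul volume measurableSet_sumFraction_target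
      (fun z _ ↦ (hasFDerivAt_sumFraction_symm z).hasFDerivWithinAt) sumFraction.symm.injOn]
  refine setLIntegral_congr_fun measurableSet_sumFraction_target fun z hz ↦ ?_
  simp only [det_fderivSumFractionSymm, abs_neg, abs_of_pos (show 0 < z.1 from hz.1)]

theorem map_sumFraction_withDensity (h : ℝ × ℝ → ENNReal) :
    ((volume.restrict sumFraction.source).withDensity h).map sumFraction =
      (volume.restrict sumFraction.target).withDensity
        fun z ↦ ENNReal.ofReal z.1 * h (sumFraction.symm z) := by
  ext A hA
  have hA' : MeasurableSet (sumFraction ⁻¹' A) := measurable_sumFraction hA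
  rw [Measure.map_apply measurable_sumFraction hA, withDensity_apply _ hA', withDensity_apply _ hA,
    ← lintegral_indicator hA', ← lintegral_indicator hA, setLIntegral_sumFraction_source]
  refine setLIntegral_congr_fun measurableSet_sumFraction_target fun z hz ↦ ?_
  by_cases hzA : z ∈ A <;> simp [indicator, hzA, sumFraction.right_inv hz]

variable {Ω : Type*} [MeasurableSpace Ω] {μ : Measure Ω} [IsFiniteMeasure μ]

lemma exists_ae_eq_mul_of_indepFun {α β : Type*} [MeasurableSpace α] [MeasurableSpace β]
    {ν₁ : Measure α} {ν₂ : Measure β} [SigmaFinite ν₁] [SigmaFinite ν₂] {V : Ω → α} {U : Ω → β}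
    {q : α × β → ENNReal} (hVU : AEMeasurable (fun ω ↦ (V ω, U ω)) μ)
    (hq : AEMeasurable q (ν₁.prod ν₂))
    (hmap : μ.map (fun ω ↦ (V ω, U ω)) = (ν₁.prod ν₂).withDensity q) (hindep : IndepFun V U μ) :
    ∃ (a : α → ENNReal) (b : β → ENNReal), ∀ᵐ z ∂ν₁.prod ν₂, q z = a z.1 * b z.2 := by
  have : HasPDF (fun ω ↦ (V ω, U ω)) μ (ν₁.prod ν₂) := hasPDF_of_map_eq_withDensity hVU q hq hmap
  exact ⟨pdf V μ ν₁, pdf U μ ν₂, ((pdf.eq_of_map_eq_withDensity q hq).1 hmap).symm.trans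
    (pdf.indepFun_iff_pdf_prod_eq_pdf_mul_pdf.1 hindep)⟩

lemma map_add_div_eq_withDensity {X Y : Ω → ℝ} (hX : AEMeasurable X μ) (hY : AEMeasurable Y μ)
    {f g : ℝ → ENNReal} (hf : AEMeasurable f (volume.restrict (Ioi 0)))
    (hg : AEMeasurable g (volume.restrict (Ioi 0)))
    (hXf : μ.map X = (volume.restrict (Ioi 0)).withDensity f)
    (hYg : μ.map Y = (volume.restrict (Ioi 0)).withDensity g) (hXY : IndepFun X Y μ) :
    μ.map (fun ω ↦ (X ω + Y ω, X ω / (X ω + Y ω))) =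
      ((volume.restrict (Ioi 0)).prod (volume.restrict (Ioo 0 1))).withDensity
        fun z ↦ ENNReal.ofReal z.1 * (f (z.2 * z.1) * g ((1 - z.2) * z.1)) := by
  have hjoint := hXY.map_prod_eq_prod_map_map hX hY
  rw [hXf, hYg, prod_withDensity₀ hf hg, Measure.prod_restrict] at hjoint
  rw [Measure.prod_restrict]
  calc μ.map (fun ω ↦ (X ω + Y ω, X ω / (X ω + Y ω)))
      = (μ.map fun ω ↦ (X ω, Y ω)).map sumFraction :=
        (AEMeasurable.map_map_of_aemeasurable measurable_sumFraction.aemeasurable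
          (hX.prodMk hY)).symm
    _ = _ := by
        rw [hjoint]
        exact map_sumFraction_withDensity _

lemma exists_ae_eq_mul_of_indepFun_add_div {X Y : Ω → ℝ} (hX : AEMeasurable X μ)
    (hY : AEMeasurable Y μ) {f g : ℝ → ℝ} (hf : ContinuousOn f (Ioi 0))
    (hg : ContinuousOn g (Ioi 0)) (hf0 : ∀ x > 0, 0 ≤ f x) (hg0 : ∀ x > 0, 0 ≤ g x)
    (hXf : μ.map X = (volume.restrict (Ioi 0)).withDensity fun x ↦ ENNReal.ofReal (f x))
    (hYg : μ.map Y = (volume.restrict (Ioi 0)).withDensity fun x ↦ ENNReal.ofReal (g x))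
    (hXY : IndepFun X Y μ)
    (hVU : IndepFun (fun ω ↦ X ω + Y ω) (fun ω ↦ X ω / (X ω + Y ω)) μ) :
    ∃ a b : ℝ → ℝ, ∀ᵐ z ∂(volume.restrict (Ioi (0 : ℝ))).prod (volume.restrict (Ioo (0 : ℝ) 1)),
      f (z.2 * z.1) * g ((1 - z.2) * z.1) = a z.1 * b z.2 := by
  have hf_comp : ContinuousOn (fun z : ℝ × ℝ ↦ f (z.2 * z.1)) sumFraction.target :=
    hf.comp (by fun_prop) fun z hz ↦ (sumFraction.map_target hz).1
  have hg_comp : ContinuousOn (fun z : ℝ × ℝ ↦ g ((1 - z.2) * z.1)) sumFraction.target :=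
    hg.comp (by fun_prop) fun z hz ↦ (sumFraction.map_target hz).2
  have hprod : (volume.restrict (Ioi (0 : ℝ))).prod (volume.restrict (Ioo (0 : ℝ) 1)) =
      volume.restrict sumFraction.target :=
    Measure.prod_restrict _ _
  have density_aemeasurable : AEMeasurable (fun z : ℝ × ℝ ↦ ENNReal.ofReal z.1 *
      (ENNReal.ofReal (f (z.2 * z.1)) * ENNReal.ofReal (g ((1 - z.2) * z.1))))
      ((volume.restrict (Ioi 0)).prod (volume.restrict (Ioo 0 1))) := by
    rw [hprod]
    exact measurable_fst.ennreal_ofReal.aemeasurable.mul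
      ((hf_comp.aemeasurable measurableSet_sumFraction_target).ennreal_ofReal.mul
        (hg_comp.aemeasurable measurableSet_sumFraction_target).ennreal_ofReal)
  have hmap := map_add_div_eq_withDensity hX hY (hf.aemeasurable measurableSet_Ioi).ennreal_ofReal
    (hg.aemeasurable measurableSet_Ioi).ennreal_ofReal hXf hYg hXY
  obtain ⟨a, b, hab⟩ := exists_ae_eq_mul_of_indepFun
    ((hX.add hY).prodMk (hX.div (hX.add hY))) density_aemeasurable hmap hVU
  refine ⟨fun v ↦ (a v).toReal / v, fun u ↦ (b u).toReal, ?_⟩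
  rw [hprod] at hab ⊢
  filter_upwards [hab, ae_restrict_mem measurableSet_sumFraction_target] with z hz hzt
  have hv : 0 < z.1 := hzt.1
  have hfz : 0 ≤ f (z.2 * z.1) := hf0 _ (sumFraction.map_target hzt).1
  have hgz : 0 ≤ g ((1 - z.2) * z.1) := hg0 _ (sumFraction.map_target hzt).2
  rw [div_mul_eq_mul_div, eq_div_iff hv.ne', ← ENNReal.toReal_mul, ← hz, ENNReal.toReal_mul,
    ENNReal.toReal_mul, ENNReal.toReal_ofReal hv.le, ENNReal.toReal_ofReal hfz,
    ENNReal.toReal_ofReal hgz, mul_comm]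

theorem minorsVanishOn_of_indepFun_add_div {X Y : Ω → ℝ} (hX : AEMeasurable X μ)
    (hY : AEMeasurable Y μ) {f g : ℝ → ℝ} (hf : ContinuousOn f (Ioi 0))
    (hg : ContinuousOn g (Ioi 0)) (hf0 : ∀ x > 0, 0 ≤ f x) (hg0 : ∀ x > 0, 0 ≤ g x)
    (hXf : μ.map X = (volume.restrict (Ioi 0)).withDensity fun x ↦ ENNReal.ofReal (f x))
    (hYg : μ.map Y = (volume.restrict (Ioi 0)).withDensity fun x ↦ ENNReal.ofReal (g x))
    (hXY : IndepFun X Y μ)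
    (hVU : IndepFun (fun ω ↦ X ω + Y ω) (fun ω ↦ X ω / (X ω + Y ω)) μ) :
    MinorsVanishOn (fun v u ↦ f (u * v) * g ((1 - u) * v)) (Ioi 0) (Ioo 0 1) := by
  have hfg : ContinuousOn (Function.uncurry fun v u ↦ f (u * v) * g ((1 - u) * v))
      (Ioi 0 ×ˢ Ioo 0 1) :=
    (hf.comp (by fun_prop) fun z hz ↦ (sumFraction.map_target hz).1).mul
      (hg.comp (by fun_prop) fun z hz ↦ (sumFraction.map_target hz).2)
  obtain ⟨a, b, hab⟩ := exists_ae_eq_mul_of_indepFun_add_div hX hY hf hg hf0 hg0 hXf hYg hXY hVU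
  exact minorsVanishOn_of_ae_eq_mul (μ := volume) (ν := volume) (a := a) (b := b) isOpen_Ioi
    isOpen_Ioo (fun u hu ↦ hfg.uncurry_right u hu) (fun v hv ↦ hfg.uncurry_left v hv) hab

end Independence

section Gamma

open Set

lemma integral_eq_one_of_isProbabilityMeasure_withDensity {α : Type*} [MeasurableSpace α]
    {ν : Measure α} {f : α → ℝ} (hf : AEStronglyMeasurable f ν) (hf0 : 0 ≤ᵐ[ν] f)
    [hprob : IsProbabilityMeasure (ν.withDensity fun x ↦ ENNReal.ofReal (f x))] :
    ∫ x, f x ∂ν = 1 := by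
  have hlint := hprob.measure_univ
  rw [withDensity_apply _ .univ, setLIntegral_univ] at hlint
  rw [integral_eq_lintegral_of_nonneg_ae hf0 hf, hlint, ENNReal.toReal_one]

theorem integrableOn_rpow_mul_exp_neg_mul_Ioi_iff {c a : ℝ} :
    IntegrableOn (fun x ↦ x ^ c * Real.exp (-(a * x))) (Ioi 0) ↔ -1 < c ∧ 0 < a := by
  refine ⟨fun hint ↦ ?_, fun ⟨hc, ha⟩ ↦ by
    simpa using integrableOn_rpow_mul_exp_neg_mul_rpow hc one_pos ha⟩
  have rpow_integrableOn {s : Set ℝ} {K : ℝ} (hs : MeasurableSet s) (hs0 : s ⊆ Ioi 0)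
      (hK : ∀ x ∈ s, 1 ≤ K * Real.exp (-(a * x))) : IntegrableOn (fun x ↦ x ^ c) s := by
    refine ((hint.mono_set hs0).const_mul K).mono'
      (by fun_prop : Measurable fun x : ℝ ↦ x ^ c).aestronglyMeasurable
      (ae_restrict_of_forall_mem hs fun x hx ↦ ?_)
    have hxc : 0 ≤ x ^ c := Real.rpow_nonneg (hs0 hx).le _
    rw [Real.norm_of_nonneg hxc, mul_left_comm]
    exact le_mul_of_one_le_right hxc (hK x hx)
  have ha : 0 < a := by
    by_contra! ha
    refine not_integrableOn_Ioi_rpow c (rpow_integrableOn (K := 1) measurableSet_Ioi subset_rfl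
      fun x (hx : 0 < x) ↦ ?_)
    rw [one_mul, Real.one_le_exp_iff]
    nlinarith
  refine ⟨(intervalIntegral.integrableOn_Ioo_rpow_iff one_pos).1 (rpow_integrableOn
    (K := Real.exp a) measurableSet_Ioo Ioo_subset_Ioi_self fun x hx ↦ ?_), ha⟩
  rw [← Real.exp_add, Real.one_le_exp_iff]
  nlinarith [hx.2]

theorem eq_gamma_const_of_integral_eq_one {C p a : ℝ}
    (h : ∫ x in Ioi 0, C * (x ^ (p - 1) * Real.exp (-(a * x))) = 1) :
    0 < p ∧ 0 < a ∧ C = a ^ p / Real.Gamma p := by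
  have hC : C ≠ 0 := by
    rintro rfl
    simp at h
  obtain ⟨hp, ha⟩ := integrableOn_rpow_mul_exp_neg_mul_Ioi_iff.1
    ((integrable_const_mul_iff hC.isUnit _).1 (integrable_of_integral_eq_one h))
  replace hp : 0 < p := by linarith
  refine ⟨hp, ha, ?_⟩
  have hΓ := Real.Gamma_pos_of_pos hp
  rw [integral_const_mul, Real.integral_rpow_mul_exp_neg_mul_Ioi hp ha, one_div,
    Real.inv_rpow ha.le] at h
  field_simp at h ⊢
  exact h

theorem gamma_density_of_map_eq_withDensity {Ω : Type*} [MeasurableSpace Ω] {μ : Measure Ω}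
    [IsProbabilityMeasure μ] {Z : Ω → ℝ} (hZ : AEMeasurable Z μ) {f : ℝ → ℝ}
    (hf0 : ∀ x > 0, 0 ≤ f x)
    (hZf : μ.map Z = (volume.restrict (Ioi 0)).withDensity fun x ↦ ENNReal.ofReal (f x))
    {C p a : ℝ} (hf : ∀ x > 0, f x = C * (x ^ (p - 1) * Real.exp (-(a * x)))) :
    0 < p ∧ 0 < a ∧ ∀ x > 0, f x = a ^ p / Real.Gamma p * x ^ (p - 1) * Real.exp (-a * x) := by
  have : IsProbabilityMeasure
      ((volume.restrict (Ioi 0)).withDensity fun x ↦ ENNReal.ofReal (f x)) :=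
    hZf ▸ Measure.isProbabilityMeasure_map hZ
  have hf_meas : AEStronglyMeasurable f (volume.restrict (Ioi 0)) :=
    AEStronglyMeasurable.congr (Measurable.aestronglyMeasurable (by fun_prop))
      (ae_restrict_of_forall_mem measurableSet_Ioi fun x hx ↦ (hf x hx).symm)
  have hint := integral_eq_one_of_isProbabilityMeasure_withDensity hf_meas
    (ae_restrict_of_forall_mem measurableSet_Ioi hf0)
  rw [setIntegral_congr_fun measurableSet_Ioi hf] at hint
  obtain ⟨hp, ha, rfl⟩ := eq_gamma_const_of_integral_eq_one hint
  exact ⟨hp, ha, fun x hx ↦ by rw [hf x hx, neg_mul, mul_assoc]⟩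

end Gamma

/-- Lukács' theorem (scalar case): if `X`, `Y` are independent positive random
variables with strictly positive continuous densities on `(0,∞)` and
`V = X + Y`, `U = X/(X+Y)` are independent, then `X` and `Y` have Gamma
distributions with the same rate parameter. -/
theorem lukacs_characterization {Ω : Type*} [MeasurableSpace Ω]
    (μ : Measure Ω) [IsProbabilityMeasure μ]
    (X Y : Ω → ℝ) (hX : Measurable X) (hY : Measurable Y)
    (fX fY : ℝ → ℝ)
    (hfXpos : ∀ x > (0:ℝ), 0 < fX x) (hfYpos : ∀ x > (0:ℝ), 0 < fY x)
    (hfXcont : ContinuousOn fX (Set.Ioi 0)) (hfYcont : ContinuousOn fY (Set.Ioi 0))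
    (hXd : μ.map X = (volume.restrict (Set.Ioi 0)).withDensity fun x => ENNReal.ofReal (fX x))
    (hYd : μ.map Y = (volume.restrict (Set.Ioi 0)).withDensity fun x => ENNReal.ofReal (fY x))
    (hXY : IndepFun X Y μ)
    (hUV : IndepFun (fun ω => X ω + Y ω) (fun ω => X ω / (X ω + Y ω)) μ) :
    ∃ a > (0:ℝ), ∃ p₁ > (0:ℝ), ∃ p₂ > (0:ℝ),
      (∀ x > (0:ℝ), fX x = a ^ p₁ / Real.Gamma p₁ * x ^ (p₁ - 1) * Real.exp (-a * x)) ∧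
      ∀ x > (0:ℝ), fY x = a ^ p₂ / Real.Gamma p₂ * x ^ (p₂ - 1) * Real.exp (-a * x) := by
  have hminors := minorsVanishOn_of_indepFun_add_div hX.aemeasurable hY.aemeasurable hfXcont hfYcont
    (fun x hx ↦ (hfXpos x hx).le) (fun x hx ↦ (hfYpos x hx).le) hXd hYd hXY hUV
  obtain ⟨C, D, p₁, p₂, a, hfX, hfY⟩ :=
    exists_eq_mul_rpow_mul_exp_of_minorsVanishOn hfXcont hfYcont hfXpos hfYpos hminors
  obtain ⟨hp₁, ha, hX_gamma⟩ := gamma_density_of_map_eq_withDensity hX.aemeasurable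
    (fun x hx ↦ (hfXpos x hx).le) hXd hfX
  obtain ⟨hp₂, -, hY_gamma⟩ := gamma_density_of_map_eq_withDensity hY.aemeasurable
    (fun x hx ↦ (hfYpos x hx).le) hYd hfY
  exact ⟨a, ha, p₁, hp₁, p₂, hp₂, hX_gamma, hY_gamma⟩
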